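/- Let q be a prime power, let d be a positive divisor of q²−1 and write d = n·gcd(q+1, d). Let ξ be a primitive element of F_{q²}. Let a, b, c ∈ F_{q²} and j ∈ ℤ satisfy a·b ≠ 0, b = ξ^{(q−1)·j·(d/n)}·a^q and a·c^q = b^q·c, and assume b·u ≠ a·v. Let u, v ∈ F_{q²} and the positive integer r satisfy either (u^{q+1} = v^{q+1} and gcd(r, (q²−1)/d) = 1) or (u^{q+1} ≠ v^{q+1} and r = 1). Let φ be a polynomial over F_{q²} and define f(x) = (a·x^q + b·x + c)^r · φ((a·x^q + b·x + c)^{(q²−1)/d}) + u·x^q + v·x. Then f is a permutation polynomial of F_{q²} if and only if h(x) = x^r·[B·φ(x) + A^{1−r}·B^{q·r}·φ(x)^q + u^{q+1} − v^{q+1}]^{(q²−1)/d} permutes U_n. -/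

import Mathlib

/-!
Let `σ x = x ^ q`, an involution of `F`, and let `K` be its fixed field. The relation between `a`
and `b` says that `σ (δ * a) = δ * b` for a power `δ` of `ξ`. Hence `x ↦ a * σ x + b * x + c` maps
`F` onto the line `δ⁻¹K`, being `δ⁻¹` times a trace plus a point of that line, and the same is true
of `z ↦ A * σ z + B * z`. The criterion of Akbary, Ghioca and Wang is then used twice: along these
two surjections it replaces `f` by a map of the form `y ↦ y ^ r * P (y ^ e)` on `δ⁻¹K`, where
`e = (q ^ 2 - 1) / d`, and along `y ↦ y ^ e`, which maps `δ⁻¹K` onto `U_n ∪ {0}`, it replaces the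
latter by `h`.
-/

open Function Set

section Criterion

/-- The Akbary-Ghioca-Wang criterion. -/
theorem bijOn_iff_bijOn_and_injOn_fibers {α β : Type*} {s : Set α} {t : Set β} (hs : s.Finite)
    {f : α → α} {g : β → β} {π ρ : α → β} (hf : MapsTo f s s) (hπ : π '' s = t) (hρ : ρ '' s = t)
    (hfg : ∀ x ∈ s, ρ (f x) = g (π x)) :
    BijOn f s s ↔ BijOn g t t ∧ ∀ x ∈ s, ∀ y ∈ s, π x = π y → f x = f y → x = y := by
  have hg : g '' t = ρ '' (f '' s) := by
    rw [← hπ, image_image, image_image]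
    exact image_congr fun x hx => (hfg x hx).symm
  refine ⟨fun hbij => ⟨?_, fun x hx y hy _ h => hbij.injOn hx hy h⟩, fun ⟨hbij, hfib⟩ => ?_⟩
  · rw [hbij.image_eq, hρ] at hg
    exact ((hπ ▸ hs.image π).surjOn_iff_bijOn_of_mapsTo (mapsTo_iff_image_subset.2 hg.le)).1 hg.ge
  · refine (hs.injOn_iff_bijOn_of_mapsTo hf).1 fun x hx y hy h => hfib x hx y hy ?_ h
    refine hbij.injOn (hπ ▸ mem_image_of_mem π hx) (hπ ▸ mem_image_of_mem π hy) ?_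
    rw [← hfg x hx, ← hfg y hy, h]

theorem eq_of_pow_eq_pow_of_coprime {G₀ : Type*} [CommGroupWithZero G₀] {r e : ℕ}
    (hre : r.Coprime e) {x y : G₀} (hy : y ≠ 0) (hr : x ^ r = y ^ r) (he : x ^ e = y ^ e) :
    x = y := by
  have h : (x / y) ^ r.gcd e = 1 := pow_gcd_eq_one.2
    ⟨by rw [div_pow, hr, div_self (pow_ne_zero _ hy)],
      by rw [div_pow, he, div_self (pow_ne_zero _ hy)]⟩
  rwa [hre.gcd_eq_one, pow_one, div_eq_one_iff_eq hy] at h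

theorem bijOn_pow_mul_comp_pow_iff {G₀ : Type*} [CommGroupWithZero G₀] {S U : Set G₀}
    (hS : S.Finite) {e r : ℕ} (he : e ≠ 0) (hr : r ≠ 0) (hre : r.Coprime e)
    (hSU : (· ^ e) '' S = insert 0 U) (hU : 0 ∉ U) {P : G₀ → G₀}
    (hP : MapsTo (fun y => y ^ r * P (y ^ e)) S S) :
    BijOn (fun y => y ^ r * P (y ^ e)) S S ↔ BijOn (fun x => x ^ r * P x ^ e) U U := by
  have hsemiconj (y : G₀) : (y ^ r * P (y ^ e)) ^ e = (y ^ e) ^ r * P (y ^ e) ^ e := by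
    rw [mul_pow, pow_right_comm]
  have hzero : (0 : G₀) ^ r * P 0 ^ e = 0 := by rw [zero_pow hr, zero_mul]
  have hinsert : BijOn (fun x => x ^ r * P x ^ e) (insert 0 U) (insert 0 U) ↔
      BijOn (fun x => x ^ r * P x ^ e) U U := by
    simpa only [hzero] using BijOn.insert_iff (f := fun x => x ^ r * P x ^ e) hU (by rwa [hzero])
  rw [bijOn_iff_bijOn_and_injOn_fibers hS hP hSU hSU (g := fun x => x ^ r * P x ^ e)
    fun y _ => hsemiconj y, hinsert]
  refine and_iff_left_of_imp fun hbij y _ z hz hyz h => ?_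
  beta_reduce at hyz h
  obtain hz0 | hzU : z ^ e = 0 ∨ z ^ e ∈ U := mem_insert_iff.1 (hSU ▸ mem_image_of_mem _ hz)
  · rw [eq_zero_of_pow_eq_zero hz0, eq_zero_of_pow_eq_zero (hyz.trans hz0)]
  have hPz : P (z ^ e) ≠ 0 := fun h0 => hU <| by
    simpa only [h0, zero_pow he, mul_zero] using hbij.mapsTo hzU
  have hz0 : z ≠ 0 := by
    rintro rfl
    exact hU (by rwa [zero_pow he] at hzU)
  rw [hyz] at h
  exact eq_of_pow_eq_pow_of_coprime hre hz0 (mul_right_cancel₀ hPz h) hyz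

end Criterion

section Involution

variable {F : Type*} [Field F] {σ : F →+* F} {δ a b c y : F}

/-- The line `δ⁻¹K`, for `δ ≠ 0`, where `K` is the fixed field of `σ`. It is the common image of the
additive maps to which the Akbary-Ghioca-Wang criterion is applied. -/
def fixedLine (σ : F →+* F) (δ : F) : Set F := {y | σ (δ * y) = δ * y}

theorem exists_map_add_self_eq_one (hσ : Involutive σ) (hne : σ ≠ RingHom.id F) :
    ∃ τ, σ τ + τ = 1 := by
  obtain ⟨t, ht⟩ : ∃ t, σ t + t ≠ 0 := by
    by_contra! hneg
    have htwo : (1 : F) + 1 = 0 := by simpa only [map_one] using hneg 1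
    refine hne (RingHom.ext fun x => ?_)
    rw [RingHom.id_apply]
    linear_combination hneg x - x * htwo
  refine ⟨t / (σ t + t), ?_⟩
  rw [map_div₀, map_add, hσ, add_comm t, ← add_div, div_self ht]

theorem map_mul_eq_mul_of_map_mul_eq_mul (hσ : Involutive σ) (hab : σ (δ * a) = δ * b) :
    σ (δ * b) = δ * a := by
  rw [← hab, hσ]

theorem mul_map_add_mul_add_mem_fixedLine (hσ : Involutive σ) (hab : σ (δ * a) = δ * b)
    (hc : c ∈ fixedLine σ δ) (x : F) : a * σ x + b * x + c ∈ fixedLine σ δ := by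
  have hba := map_mul_eq_mul_of_map_mul_eq_mul hσ hab
  replace hc : σ (δ * c) = δ * c := hc
  change σ _ = _
  simp only [map_add, map_mul, hσ x] at hab hba hc ⊢
  linear_combination x * hab + σ x * hba + hc

theorem range_mul_map_add_mul_add (hσ : Involutive σ) (hne : σ ≠ RingHom.id F) (hδ : δ ≠ 0)
    (hb : b ≠ 0) (hab : σ (δ * a) = δ * b) (hc : c ∈ fixedLine σ δ) :
    range (fun x => a * σ x + b * x + c) = fixedLine σ δ := by
  refine Subset.antisymm (range_subset_iff.2 (mul_map_add_mul_add_mem_fixedLine hσ hab hc))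
    fun y (hy : σ (δ * y) = δ * y) => ?_
  obtain ⟨τ, hτ⟩ := exists_map_add_self_eq_one hσ hne
  have hba := map_mul_eq_mul_of_map_mul_eq_mul hσ hab
  have ha : a ≠ 0 :=
    right_ne_zero_of_mul (hba ▸ (map_ne_zero σ).2 (mul_ne_zero hδ hb) : δ * a ≠ 0)
  have hyc : σ (δ * (y - c)) = δ * (y - c) := by
    rw [mul_sub, map_sub, hy, show σ (δ * c) = δ * c from hc]
  refine ⟨δ * (y - c) * τ / (δ * b), ?_⟩
  simp only [map_div₀, map_mul _ (δ * (y - c)), hyc, hba]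
  field_simp
  linear_combination (y - c) * hτ

theorem norm_sub_norm_mul_mem_fixedLine (hσ : Involutive σ) (u v : F) (hy : y ∈ fixedLine σ δ) :
    (u * σ u - v * σ v) * y ∈ fixedLine σ δ := by
  have hD : σ (u * σ u - v * σ v) = u * σ u - v * σ v := by
    simp only [map_sub, map_mul, hσ u, hσ v, mul_comm]
  change σ _ = _
  rw [mul_left_comm, map_mul, hD, show σ (δ * y) = δ * y from hy]

theorem map_mul_det (hσ : Involutive σ) (hab : σ (δ * a) = δ * b) (u v : F) :
    σ (δ * (b * u - a * v)) = δ * (a * σ u - b * σ v) := by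
  have hba := map_mul_eq_mul_of_map_mul_eq_mul hσ hab
  simp only [map_mul, map_sub] at hab hba ⊢
  linear_combination σ u * hba - σ v * hab

theorem bijective_iff_bijOn_fixedLine [Finite F] (hσ : Involutive σ) (hne : σ ≠ RingHom.id F)
    (hδ : δ ≠ 0) (hb : b ≠ 0) (hab : σ (δ * a) = δ * b) (hc : c ∈ fixedLine σ δ) {u v A B : F}
    (hA : A = b * u - a * v) (hB : B = a * σ u - b * σ v) (hA0 : A ≠ 0) (G : F → F) :
    Bijective (fun x => G (a * σ x + b * x + c) + u * σ x + v * x) ↔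
      BijOn (fun y => A * σ (G y) + B * G y + (u * σ u - v * σ v) * y)
        (fixedLine σ δ) (fixedLine σ δ) := by
  have hAB : σ (δ * A) = δ * B := hA ▸ hB ▸ map_mul_det hσ hab u v
  have hB0 : B ≠ 0 :=
    right_ne_zero_of_mul (hAB ▸ (map_ne_zero σ).2 (mul_ne_zero hδ hA0) : δ * B ≠ 0)
  have hπ := range_mul_map_add_mul_add hσ hne hδ hb hab hc
  have hρ := range_mul_map_add_mul_add hσ hne hδ hB0 hAB
    (norm_sub_norm_mul_mem_fixedLine hσ u v hc)
  rw [← bijOn_univ, bijOn_iff_bijOn_and_injOn_fibers finite_univ (mapsTo_univ _ _)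
    (image_univ.trans hπ) (image_univ.trans hρ) fun x _ => ?_]
  · refine and_iff_left fun x _ y _ hxy hf => mul_left_cancel₀ hA0 ?_
    beta_reduce at hxy hf
    rw [hxy] at hf
    linear_combination u * hxy - a * hf + (x - y) * hA
  · simp only [map_add, map_mul, hσ x, hA, hB]
    ring

theorem mem_fixedLine_iff_mul_map_eq (hσ : Involutive σ) (hδ : δ ≠ 0) (ha : a ≠ 0)
    (hab : σ (δ * a) = δ * b) : y ∈ fixedLine σ δ ↔ a * σ y = σ b * y := by
  have hba : σ δ * σ b = δ * a := by rw [← map_mul, map_mul_eq_mul_of_map_mul_eq_mul hσ hab]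
  calc σ (δ * y) = δ * y ↔ a * (σ δ * σ y) = a * (δ * y) := by rw [mul_right_inj' ha, map_mul]
    _ ↔ σ δ * (a * σ y) = σ δ * (σ b * y) := by
      rw [mul_left_comm a, ← mul_assoc a, mul_comm a δ, ← hba, mul_assoc]
    _ ↔ a * σ y = σ b * y := mul_right_inj' ((map_ne_zero σ).2 hδ)

theorem mul_map_pow_mul_add (hσ : Involutive σ) (hδ : δ ≠ 0) (ha : a ≠ 0)
    (hab : σ (δ * a) = δ * b) (hy : y ∈ fixedLine σ δ) (r : ℕ) (w : F) :
    a * σ (y ^ r * w) + b * (y ^ r * w) =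
      y ^ r * (b * w + a * (a ^ r)⁻¹ * σ b ^ r * σ w) := by
  have hyr : a ^ r * σ y ^ r = σ b ^ r * y ^ r := by
    rw [← mul_pow, ← mul_pow, (mem_fixedLine_iff_mul_map_eq hσ hδ ha hab).1 hy]
  rw [map_mul, map_pow]
  field_simp
  linear_combination a * σ w * hyr

theorem bijective_iff_bijOn_of_image_pow [Finite F] (hσ : Involutive σ) (hne : σ ≠ RingHom.id F)
    (hδ : δ ≠ 0) (hb : b ≠ 0) (hab : σ (δ * a) = δ * b) (hc : c ∈ fixedLine σ δ) {u v A B : F}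
    (hA : A = b * u - a * v) (hB : B = a * σ u - b * σ v) (hA0 : A ≠ 0) {e r : ℕ} (he : e ≠ 0)
    (hr : r ≠ 0) (hre : r.Coprime e) (huvr : u * σ u = v * σ v ∨ r = 1) {U : Set F}
    (hSU : (· ^ e) '' fixedLine σ δ = insert 0 U) (hU : 0 ∉ U) (φ : F → F) :
    Bijective (fun x => (a * σ x + b * x + c) ^ r * φ ((a * σ x + b * x + c) ^ e) +
        u * σ x + v * x) ↔
      BijOn (fun x => x ^ r * (B * φ x + A * (A ^ r)⁻¹ * σ B ^ r * σ (φ x) +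
        (u * σ u - v * σ v)) ^ e) U U := by
  have hAB : σ (δ * A) = δ * B := hA ▸ hB ▸ map_mul_det hσ hab u v
  rw [bijective_iff_bijOn_fixedLine hσ hne hδ hb hab hc hA hB hA0 fun y => y ^ r * φ (y ^ e)]
  let P (x : F) : F := B * φ x + A * (A ^ r)⁻¹ * σ B ^ r * σ (φ x) + (u * σ u - v * σ v)
  have hfactor : EqOn (fun y => A * σ (y ^ r * φ (y ^ e)) + B * (y ^ r * φ (y ^ e)) +
      (u * σ u - v * σ v) * y) (fun y => y ^ r * P (y ^ e)) (fixedLine σ δ) := by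
    intro y hy
    have hD : (u * σ u - v * σ v) * y = y ^ r * (u * σ u - v * σ v) := by
      rcases huvr with huv | rfl
      · rw [huv, sub_self, zero_mul, mul_zero]
      · rw [pow_one, mul_comm]
    simp only [mul_map_pow_mul_add hσ hδ hA0 hAB hy, hD, P, mul_add]
  rw [hfactor.bijOn_iff]
  exact bijOn_pow_mul_comp_pow_iff (P := P) (toFinite _) he hr hre hSU hU <|
    hfactor.mapsTo_iff.1 fun y hy => mul_map_add_mul_add_mem_fixedLine hσ hAB
      (norm_sub_norm_mul_mem_fixedLine hσ u v hy) _

theorem fixedLine_eq_insert {q : ℕ} (hσ : ∀ x, σ x = x ^ q) (hq : q ≠ 0) (hδ : δ ≠ 0) :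
    fixedLine σ δ = insert 0 {y | (δ * y) ^ (q - 1) = 1} := by
  ext y
  rcases eq_or_ne y 0 with rfl | hy
  · simp [fixedLine]
  · change σ _ = _ ↔ _ ∨ _
    rw [or_iff_right hy, hσ, ← mul_pow_sub_one hq, mul_eq_left₀ (mul_ne_zero hδ hy)]
    rfl

end Involution

section Cyclic

theorem mul_gcd_eq_of_mul_eq_mul {d e m m' n : ℕ} (hd : d ≠ 0) (h : m * m' = d * e)
    (hn : d = n * m'.gcd d) : n * m.gcd e = m := by
  refine Nat.eq_of_mul_eq_mul_right (Nat.gcd_pos_of_pos_right m' (Nat.pos_of_ne_zero hd)) ?_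
  calc n * m.gcd e * m'.gcd d = d * m.gcd e := by rw [mul_right_comm, ← hn]
    _ = (m * d).gcd (m * m') := by rw [h, mul_comm m, Nat.gcd_mul_left]
    _ = m * m'.gcd d := by rw [Nat.gcd_mul_left, Nat.gcd_comm]

theorem range_powMonoidHom_eq_ker_of_card_eq_mul {G : Type*} [CommGroup G] [IsCyclic G] [Finite G]
    {n k : ℕ} (h : Nat.card G = n * k) :
    (powMonoidHom k : G →* G).range = (powMonoidHom n).ker := by
  refine Subgroup.eq_of_le_of_card_ge ?_ ?_
  · rintro _ ⟨x, rfl⟩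
    rw [MonoidHom.mem_ker, powMonoidHom_apply, powMonoidHom_apply, ← pow_mul, mul_comm, ← h,
      pow_card_eq_one']
  · have hk : 0 < k := Nat.pos_of_mul_pos_left (h ▸ Nat.card_pos)
    rw [IsCyclic.card_powMonoidHom_ker, IsCyclic.card_powMonoidHom_range, h,
      Nat.gcd_mul_right_left, Nat.gcd_mul_left_left, Nat.mul_div_cancel _ hk]

theorem map_powMonoidHom_ker {G : Type*} [CommGroup G] [IsCyclic G] [Finite G]
    {m n e : ℕ} (hm : m ∣ Nat.card G) (hmn : n * m.gcd e = m) :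
    (powMonoidHom m : G →* G).ker.map (powMonoidHom e) = (powMonoidHom n).ker := by
  ext z
  simp only [Subgroup.mem_map, MonoidHom.mem_ker, powMonoidHom_apply]
  constructor
  · rintro ⟨w, hw, rfl⟩
    obtain ⟨k, hk⟩ := Nat.gcd_dvd_right m e
    have hen : e * n = m * k := by
      conv_rhs => rw [← hmn, mul_assoc, ← hk, mul_comm]
    rw [← pow_mul, hen, pow_mul, hw, one_pow]
  · intro hz
    obtain ⟨k, hk⟩ := hm
    obtain ⟨x, hx⟩ : z ∈ (powMonoidHom (k * m.gcd e)).range := by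
      rwa [range_powMonoidHom_eq_ker_of_card_eq_mul (n := n)
        (by rw [hk, mul_left_comm, hmn, mul_comm])]
    have hxm : (x ^ k) ^ m = 1 := by rw [← pow_mul, mul_comm, ← hk, pow_card_eq_one']
    refine ⟨(x ^ k) ^ m.gcdB e, ?_, ?_⟩
    · rw [← zpow_natCast, zpow_comm, zpow_natCast, hxm, one_zpow]
    · rw [← hx, powMonoidHom_apply, pow_mul, ← zpow_natCast (x ^ k) (m.gcd e),
        Nat.gcd_eq_gcd_ab, zpow_add, zpow_mul, zpow_natCast, hxm, one_zpow, one_mul,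
        zpow_mul, zpow_natCast (x ^ k) e, ← zpow_natCast _ e, ← zpow_natCast _ e, zpow_comm]

end Cyclic

section FiniteField

variable {F : Type*} [Field F] [Fintype F]

theorem isPrimePow_of_card_eq_sq {q : ℕ} (hF : Fintype.card F = q ^ 2) : IsPrimePow q :=
  (isPrimePow_pow_iff two_ne_zero).1 (hF ▸ FiniteField.isPrimePow_card F)

theorem exists_involutive_ringHom_eq_pow {q : ℕ} (hF : Fintype.card F = q ^ 2) :
    ∃ σ : F →+* F, (∀ x, σ x = x ^ q) ∧ Involutive σ ∧ σ ≠ RingHom.id F := by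
  have hq := isPrimePow_of_card_eq_sq hF
  obtain ⟨p, k, hp, -, rfl⟩ := id hq
  have : Fact p.Prime := ⟨hp.nat_prime⟩
  have : CharP F p := charP_of_card_eq_prime_pow (hF.trans (pow_mul p k 2).symm)
  have hσ : ∀ x, iterateFrobenius F p k x = x ^ p ^ k := iterateFrobenius_def p k
  refine ⟨iterateFrobenius F p k, hσ, fun x => ?_, fun hid => ?_⟩
  · rw [hσ, hσ, ← pow_mul, ← sq, ← hF, FiniteField.pow_card]
  · have hq1 := hq.one_lt
    have hpow (x : Fˣ) : x ^ (p ^ k - 1) = 1 := by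
      rw [← mul_eq_left (a := x), mul_pow_sub_one hq.ne_zero]
      exact Units.ext ((hσ x).symm.trans (congrArg (· (x : F)) hid))
    have hle : Fintype.card F - 1 ≤ p ^ k - 1 :=
      Nat.le_of_dvd (Nat.sub_pos_of_lt hq1) ((FiniteField.forall_pow_eq_one_iff F _).1 hpow)
    have hlt : p ^ k < (p ^ k) ^ 2 := lt_self_pow₀ hq1 one_lt_two
    omega

theorem image_pow_setOf_pow_eq_one {m n e : ℕ} (hm0 : m ≠ 0) (hm : m ∣ Fintype.card F - 1)
    (hmn : n * m.gcd e = m) : (· ^ e) '' {w : F | w ^ m = 1} = {z | z ^ n = 1} := by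
  have himage {k : ℕ} (hk : k ≠ 0) :
      {x : F | x ^ k = 1} = Units.val '' ((powMonoidHom k : Fˣ →* Fˣ).ker : Set Fˣ) := by
    ext x
    constructor
    · exact fun hx => ⟨.ofPowEqOne x k hx hk, Units.pow_ofPowEqOne hx hk, rfl⟩
    · rintro ⟨y, hy, rfl⟩
      exact congrArg Units.val hy
  have hn0 : n ≠ 0 := left_ne_zero_of_mul (hmn.trans_ne hm0)
  rw [himage hm0, himage hn0, ← map_powMonoidHom_ker (m := m) (e := e) _ hmn, Subgroup.coe_map,
    image_image, image_image]
  · rfl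
  · rwa [Nat.card_units, Nat.card_eq_fintype_card]

theorem image_pow_fixedLine {σ : F →+* F} {q : ℕ} (hσ : ∀ x, σ x = x ^ q)
    (hF : Fintype.card F = q ^ 2) {d e n : ℕ} (hde : d * e = q ^ 2 - 1)
    (hn : d = n * (q + 1).gcd d) {δ : F} (hδ : δ ≠ 0) (hδe : (δ ^ e) ^ n = 1) :
    (· ^ e) '' fixedLine σ δ = insert 0 {x | x ^ n = 1} := by
  have hq := (isPrimePow_of_card_eq_sq hF).one_lt
  have hfactor : q ^ 2 - 1 = (q - 1) * (q + 1) := by simpa [mul_comm] using Nat.sq_sub_sq q 1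
  have hde0 : d * e ≠ 0 := hde.trans_ne (Nat.sub_pos_of_lt (Nat.one_lt_pow two_ne_zero hq)).ne'
  obtain ⟨hd, he⟩ := mul_ne_zero_iff.1 hde0
  have hroots := image_pow_setOf_pow_eq_one (Nat.sub_ne_zero_of_lt hq)
    (hF ▸ hfactor ▸ dvd_mul_right _ _ : q - 1 ∣ Fintype.card F - 1)
    (mul_gcd_eq_of_mul_eq_mul hd (hfactor.symm.trans hde.symm) hn)
  rw [fixedLine_eq_insert hσ (by omega) hδ, image_insert_eq, zero_pow he]
  congr 1
  ext z
  calc z ∈ (· ^ e) '' {y | (δ * y) ^ (q - 1) = 1}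
      ↔ ∃ y, (δ * y) ^ (q - 1) = 1 ∧ (δ * y) ^ e = δ ^ e * z := by
        simp only [mul_pow δ _ e, mul_right_inj' (pow_ne_zero e hδ)]
        rfl
    _ ↔ δ ^ e * z ∈ (· ^ e) '' {w | w ^ (q - 1) = 1} :=
        ((mulLeft_bijective₀ δ hδ).surjective.exists
          (p := fun w => w ^ (q - 1) = 1 ∧ w ^ e = δ ^ e * z)).symm
    _ ↔ z ^ n = 1 := by rw [hroots, mem_ofPred_eq, mul_pow, hδe, one_mul]

end FiniteField

theorem stmt_1_general {F : Type*} [Field F] [Fintype F] {q : ℕ} (hF : Fintype.card F = q ^ 2)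
    {d e n : ℕ} (hde : d * e = q ^ 2 - 1) (hn : d = n * (q + 1).gcd d) {ξ : F} (hξ : ξ ≠ 0)
    {a b c u v : F} {j : ℤ} (hab : a * b ≠ 0)
    (hb : b = ξ ^ (((q : ℤ) - 1) * j * ((d / n : ℕ) : ℤ)) * a ^ q)
    (hac : a * c ^ q = b ^ q * c) (hA0 : b * u ≠ a * v) {r : ℕ} (hr : r ≠ 0) (hre : r.Coprime e)
    (huvr : u ^ (q + 1) = v ^ (q + 1) ∨ r = 1) (φ : F → F)
    {A B : F} (hA : A = b * u - a * v) (hB : B = a * u ^ q - b * v ^ q) :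
    Bijective (fun x => (a * x ^ q + b * x + c) ^ r * φ ((a * x ^ q + b * x + c) ^ e) +
        u * x ^ q + v * x) ↔
      BijOn (fun x => x ^ r * (B * φ x + A * (A ^ r)⁻¹ * B ^ (q * r) * φ x ^ q +
        u ^ (q + 1) - v ^ (q + 1)) ^ e) {x | x ^ n = 1} {x | x ^ n = 1} := by
  obtain ⟨σ, hσ, hinv, hne⟩ := exists_involutive_ringHom_eq_pow hF
  have hq2 : 1 < q ^ 2 := hF ▸ Fintype.one_lt_card
  obtain ⟨hd0, he0⟩ : d ≠ 0 ∧ e ≠ 0 := mul_ne_zero_iff.1 (by omega)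
  have hn0 : n ≠ 0 := left_ne_zero_of_mul (hn ▸ hd0)
  obtain ⟨δ, hδ⟩ : ∃ δ : F, δ = ξ ^ (j * (d / n : ℕ)) := ⟨_, rfl⟩
  have hδ0 : δ ≠ 0 := hδ ▸ zpow_ne_zero _ hξ
  have hδe : (δ ^ e) ^ n = 1 := by
    have hdn : d / n * (e * n) = Fintype.card F - 1 := by
      rw [hF, ← hde, mul_comm e, ← mul_assoc, Nat.div_mul_cancel (Dvd.intro _ hn.symm)]
    rw [← pow_mul, hδ, ← zpow_natCast, ← zpow_mul, mul_assoc, ← Nat.cast_mul, hdn, mul_comm,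
      zpow_mul, zpow_natCast, FiniteField.pow_card_sub_one_eq_one ξ hξ, one_zpow]
  have hσab : σ (δ * a) = δ * b := by
    rw [hb, hσ, mul_assoc ((q : ℤ) - 1), mul_comm ((q : ℤ) - 1), zpow_mul, ← hδ,
      zpow_sub_one₀ hδ0, zpow_natCast, mul_pow]
    field_simp
  have hc : c ∈ fixedLine σ δ := by
    rwa [mem_fixedLine_iff_mul_map_eq hinv hδ0 (left_ne_zero_of_mul hab) hσab, hσ, hσ]
  have hmain := bijective_iff_bijOn_of_image_pow hinv hne hδ0 (right_ne_zero_of_mul hab) hσab hc hA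
    (B := B) (by rwa [hσ, hσ]) (hA ▸ sub_ne_zero.2 hA0) he0 hr hre
    (by simpa only [hσ, ← pow_succ'] using huvr) (image_pow_fixedLine hσ hF hde hn hδ0 hδe)
    (by simp [hn0]) φ
  simpa only [hσ, ← pow_mul, ← pow_succ', ← add_sub_assoc] using hmain

theorem stmt_1 {F : Type*} [Field F] [Fintype F]
    (q : ℕ) (hq : IsPrimePow q) (hF : Fintype.card F = q ^ 2)
    (d n : ℕ) (hd0 : 0 < d) (hdvd : d ∣ q ^ 2 - 1)
    (hn : d = n * Nat.gcd (q + 1) d)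
    (ξ : F) (hξ : orderOf ξ = q ^ 2 - 1)
    (a b c u v : F) (j : ℤ) (hab : a * b ≠ 0)
    (hb : b = ξ ^ (((q : ℤ) - 1) * j * ((d / n : ℕ) : ℤ)) * a ^ q)
    (hac : a * c ^ q = b ^ q * c)
    (hA0 : b * u ≠ a * v)
    (r : ℕ) (hr : 0 < r)
    (huvr : (u ^ (q + 1) = v ^ (q + 1) ∧ Nat.gcd r ((q ^ 2 - 1) / d) = 1) ∨
      (u ^ (q + 1) ≠ v ^ (q + 1) ∧ r = 1))
    (φ : Polynomial F)
    (A B : F) (hA : A = b * u - a * v) (hB : B = a * u ^ q - b * v ^ q)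
    (f h : F → F)
    (hf : f = fun x => (a * x ^ q + b * x + c) ^ r *
      φ.eval ((a * x ^ q + b * x + c) ^ ((q ^ 2 - 1) / d)) + u * x ^ q + v * x)
    (hh : h = fun x => x ^ r * (B * φ.eval x +
      A * (A ^ r)⁻¹ * B ^ (q * r) * (φ.eval x) ^ q +
      u ^ (q + 1) - v ^ (q + 1)) ^ ((q ^ 2 - 1) / d)) :
    Function.Bijective f ↔
      Set.BijOn h {x : F | x ^ n = 1} {x : F | x ^ n = 1} := by
  have hξ0 : ξ ≠ 0 := by
    rintro rfl
    exact (Nat.sub_pos_of_lt (hF ▸ Fintype.one_lt_card : 1 < q ^ 2)).ne (orderOf_zero F ▸ hξ)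
  have hre : r.Coprime ((q ^ 2 - 1) / d) :=
    huvr.elim And.right fun hr1 => hr1.2 ▸ Nat.coprime_one_left _
  rw [hf, hh]
  exact stmt_1_general hF (Nat.mul_div_cancel' hdvd) hn hξ0 hab hb hac hA0 hr.ne' hre
    (huvr.imp And.left And.right) (φ.eval ·) hA hB
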